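/- Let n ≥ 2 and let κ > 0, λ ≥ 0, μ ≥ 0. Then ∫_0^{π/2} ω_{κ,λ}(sin φ) sin^{μ+2} φ cos^{n-2} φ dφ > (1/(n-1)) ∫_0^{π/2} ω_{κ,λ}(sin φ) sin^{μ} φ cos^{n} φ dφ. (In the notation of the proof of the extremal lemma, this is the key inequality U > V.) -/

import Mathlib

/-!
Write `W φ = ω_{κ,λ}(sin φ)` and integrate the derivative of `W · sin^{μ+1} · cos^{n-1}` over
`[0, π/2]`. With `U = ∫ W sin^{μ+2} cos^{n-2}` and `V = ∫ W sin^μ cos^n`, the boundary values vanish,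
so
`(n - 1) U = (μ + 1) V + ∫ W' sin^{μ+1} cos^{n-1}`,
and the last integral is positive because `W' > 0` on `(0, π/2)`, while `V ≥ 0` and `μ ≥ 0`.
Integrability of `W'` needs no estimate near `0`: it is a nonnegative derivative of a function
continuous on the closed interval, continuity at `0` coming from `Γ(λ+1, x) → 0` as `x → ∞`.
-/

open MeasureTheory Real

/-- The function `ω_{κ,λ}(u) = ∫_{κ/u²}^∞ ξ^λ e^{-ξ} dξ = Γ(λ+1, κ/u²)` for `u ≠ 0`;
for `u = 0` it is `Γ(λ+1)` when `κ = 0` and `0` when `κ > 0`. -/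
noncomputable def omegaKL (κ lam u : ℝ) : ℝ :=
  if u = 0 then (if κ = 0 then Real.Gamma (lam + 1) else 0)
  else ∫ ξ in Set.Ioi (κ / u ^ 2), ξ ^ lam * Real.exp (-ξ)

theorem integrableOn_gammaIntegrand {lam : ℝ} (hlam : 0 ≤ lam) :
    IntegrableOn (fun ξ : ℝ => ξ ^ lam * Real.exp (-ξ)) (Set.Ioi 0) := by
  have h := Real.GammaIntegral_convergent (s := lam + 1) (by linarith)
  refine h.congr_fun (fun x _ => ?_) measurableSet_Ioi
  simp only [add_sub_cancel_right]
  ring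

theorem continuous_gammaIntegrand {lam : ℝ} (hlam : 0 ≤ lam) :
    Continuous (fun ξ : ℝ => ξ ^ lam * Real.exp (-ξ)) :=
  (Real.continuous_rpow_const hlam).mul (by fun_prop)

theorem upperGamma_eq {lam : ℝ} (hlam : 0 ≤ lam) {t : ℝ} (ht : 0 ≤ t) :
    ∫ ξ in Set.Ioi t, ξ ^ lam * Real.exp (-ξ) =
      (∫ ξ in Set.Ioi (0 : ℝ), ξ ^ lam * Real.exp (-ξ)) -
        ∫ ξ in (0 : ℝ)..t, ξ ^ lam * Real.exp (-ξ) := by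
  have h := integrableOn_gammaIntegrand hlam
  have := intervalIntegral.integral_interval_add_Ioi (a := 0) (b := t) h
    (h.mono_set (Set.Ioi_subset_Ioi ht))
  linarith

theorem omegaKL_nonneg {κ lam : ℝ} (hκ : 0 < κ) (u : ℝ) : 0 ≤ omegaKL κ lam u := by
  unfold omegaKL
  split_ifs with h1 h2
  · exact absurd h2 hκ.ne'
  · exact le_rfl
  · refine setIntegral_nonneg measurableSet_Ioi fun x hx => ?_
    have : 0 ≤ x := (div_nonneg hκ.le (sq_nonneg u)).trans (le_of_lt hx)
    positivity

theorem omegaKL_eq {κ lam : ℝ} (hκ : 0 < κ) (hlam : 0 ≤ lam) {u : ℝ} (hu : u ≠ 0) :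
    omegaKL κ lam u = (∫ ξ in Set.Ioi (0 : ℝ), ξ ^ lam * Real.exp (-ξ)) -
        ∫ ξ in (0 : ℝ)..(κ / u ^ 2), ξ ^ lam * Real.exp (-ξ) := by
  rw [omegaKL, if_neg hu, upperGamma_eq hlam (by positivity)]

theorem omegaKL_hasDerivAt {κ lam : ℝ} (hκ : 0 < κ) (hlam : 0 ≤ lam) {u : ℝ} (hu : u ≠ 0) :
    HasDerivAt (omegaKL κ lam)
      ((κ / u ^ 2) ^ lam * Real.exp (-(κ / u ^ 2)) * (2 * κ / u ^ 3)) u := by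
  have hc := continuous_gammaIntegrand hlam
  have h1 : HasDerivAt (fun t : ℝ => ∫ ξ in (0 : ℝ)..t, ξ ^ lam * Real.exp (-ξ))
      ((κ / u ^ 2) ^ lam * Real.exp (-(κ / u ^ 2))) (κ / u ^ 2) :=
    intervalIntegral.integral_hasDerivAt_right (hc.intervalIntegrable _ _)
      (hc.stronglyMeasurableAtFilter _ _) hc.continuousAt
  have h2 : HasDerivAt (fun u : ℝ => κ / u ^ 2) (-(2 * κ / u ^ 3)) u := by
    have := (hasDerivAt_const u κ).div (hasDerivAt_pow 2 u) (pow_ne_zero 2 hu)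
    refine this.congr_deriv ?_
    field_simp
    ring
  have h3 := (h1.comp u h2).const_sub (∫ ξ in Set.Ioi (0 : ℝ), ξ ^ lam * Real.exp (-ξ))
  refine (h3.congr_deriv (by ring)).congr_of_eventuallyEq ?_
  filter_upwards [isOpen_ne.mem_nhds hu] with v hv
  exact omegaKL_eq hκ hlam hv

/-- Since `κ > 0`, the value `0` assigned at `u = 0` is the limit: `κ / u² → ∞`, so the tail of the
Gamma integral vanishes. -/
theorem omegaKL_continuous {κ lam : ℝ} (hκ : 0 < κ) (hlam : 0 ≤ lam) :
    Continuous (omegaKL κ lam) := by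
  rw [continuous_iff_continuousAt]
  intro u
  by_cases hu : u = 0
  · subst hu
    have h0 : omegaKL κ lam 0 = 0 := by simp [omegaKL, hκ.ne']
    rw [← continuousWithinAt_compl_self, ContinuousWithinAt, h0]
    have hinf : Filter.Tendsto (fun u : ℝ => κ / u ^ 2) (nhdsWithin 0 {0}ᶜ) Filter.atTop := by
      have h : Filter.Tendsto (fun u : ℝ => u ^ 2) (nhdsWithin 0 {0}ᶜ)
          (nhdsWithin 0 (Set.Ioi 0)) := by
        refine tendsto_nhdsWithin_iff.2 ⟨?_, ?_⟩
        · have : Filter.Tendsto (fun u : ℝ => u ^ 2) (nhds 0) (nhds (0 ^ 2)) :=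
            (continuous_pow 2).tendsto 0
          rw [zero_pow two_ne_zero] at this
          exact this.mono_left nhdsWithin_le_nhds
        · filter_upwards [self_mem_nhdsWithin] with u hu
          exact sq_pos_of_ne_zero hu
      simpa [div_eq_mul_inv] using
        (tendsto_inv_nhdsGT_zero.comp h).const_mul_atTop hκ
    have h1 := (intervalIntegral_tendsto_integral_Ioi 0 (integrableOn_gammaIntegrand hlam) hinf).const_sub
      (∫ ξ in Set.Ioi (0 : ℝ), ξ ^ lam * Real.exp (-ξ))
    rw [sub_self] at h1
    refine h1.congr' ?_
    filter_upwards [self_mem_nhdsWithin] with v hv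
    exact (omegaKL_eq hκ hlam hv).symm
  · exact (omegaKL_hasDerivAt hκ hlam hu).continuousAt

/-- The key inequality `U > V` from the proof of the extremal lemma:
`∫_0^{π/2} ω_{κ,λ}(sin φ) sin^{μ+2}φ cos^{n-2}φ dφ
  > (n-1)⁻¹ ∫_0^{π/2} ω_{κ,λ}(sin φ) sin^{μ}φ cos^{n}φ dφ`. -/
theorem stmt_4 (n : ℕ) (hn : 2 ≤ n) (κ lam μ : ℝ) (hκ : 0 < κ) (hlam : 0 ≤ lam) (hμ : 0 ≤ μ) :
    (1 / ((n : ℝ) - 1)) *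
      ∫ φ in (0 : ℝ)..(π / 2), omegaKL κ lam (sin φ) * sin φ ^ μ * cos φ ^ (n : ℝ)
    < ∫ φ in (0 : ℝ)..(π / 2),
        omegaKL κ lam (sin φ) * sin φ ^ (μ + 2) * cos φ ^ ((n : ℝ) - 2) := by
  obtain ⟨m, rfl⟩ := Nat.exists_eq_add_of_le' hn
  have hm : ((m + 2 : ℕ) : ℝ) - 2 = (m : ℕ) := by push_cast; ring
  have hm1 : ((m + 2 : ℕ) : ℝ) - 1 = m + 1 := by push_cast; ring
  -- Natural powers agree with the real ones, including `0 ^ 0 = 1` for `cos (π / 2)` when `n = 2`.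
  rw [hm, hm1]
  simp only [Real.rpow_natCast]
  have hpi : (0 : ℝ) < π / 2 := by positivity
  have hs : ∀ φ ∈ Set.Ioo (0 : ℝ) (π / 2), 0 < sin φ := fun φ h =>
    sin_pos_of_pos_of_lt_pi h.1 (by linarith [h.2])
  have hc : ∀ φ ∈ Set.Ioo (0 : ℝ) (π / 2), 0 < cos φ := fun φ h =>
    cos_pos_of_mem_Ioo ⟨by linarith [h.1], h.2⟩
  have hW : Continuous (fun φ => omegaKL κ lam (sin φ)) :=
    (omegaKL_continuous hκ hlam).comp continuous_sin
  have hpow : ∀ p : ℝ, 0 ≤ p → Continuous (fun φ => sin φ ^ p) := fun p hp =>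
    (Real.continuous_rpow_const hp).comp continuous_sin
  set W' : ℝ → ℝ := fun φ => (κ / sin φ ^ 2) ^ lam * Real.exp (-(κ / sin φ ^ 2)) *
    (2 * κ / sin φ ^ 3) * cos φ with hW'
  have hWd : ∀ φ ∈ Set.Ioo (0 : ℝ) (π / 2),
      HasDerivAt (fun φ => omegaKL κ lam (sin φ)) (W' φ) φ := fun φ h =>
    (omegaKL_hasDerivAt hκ hlam (hs φ h).ne').comp φ (hasDerivAt_sin φ)
  have hWpos : ∀ φ ∈ Set.Ioo (0 : ℝ) (π / 2), 0 < W' φ := fun φ h => by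
    have := hs φ h
    have := hc φ h
    simp only [hW']
    positivity
  have hW'int : IntervalIntegrable W' volume 0 (π / 2) := by
    refine intervalIntegral.intervalIntegrable_deriv_of_nonneg hW.continuousOn ?_ ?_ <;>
      rw [min_eq_left hpi.le, max_eq_right hpi.le]
    · exact hWd
    · exact fun φ h => (hWpos φ h).le
  have hA : IntervalIntegrable (fun φ => W' φ * (sin φ ^ (μ + 1) * cos φ ^ (m + 1)))
      volume 0 (π / 2) :=
    hW'int.mul_continuousOn
      ((hpow _ (by linarith)).mul (continuous_cos.pow _)).continuousOn
  have hB : IntervalIntegrable (fun φ => omegaKL κ lam (sin φ) * sin φ ^ μ * cos φ ^ (m + 2))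
      volume 0 (π / 2) :=
    ((hW.mul (hpow _ hμ)).mul (continuous_cos.pow _)).intervalIntegrable _ _
  have hC : IntervalIntegrable (fun φ => omegaKL κ lam (sin φ) * sin φ ^ (μ + 2) * cos φ ^ m)
      volume 0 (π / 2) :=
    ((hW.mul (hpow _ (by linarith))).mul (continuous_cos.pow _)).intervalIntegrable _ _
  have hApos : 0 < ∫ φ in (0 : ℝ)..(π / 2), W' φ * (sin φ ^ (μ + 1) * cos φ ^ (m + 1)) := by
    refine intervalIntegral.intervalIntegral_pos_of_pos_on hA (fun φ h => ?_) hpi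
    have := hs φ h
    have := hc φ h
    have := hWpos φ h
    positivity
  have hBnn : 0 ≤ ∫ φ in (0 : ℝ)..(π / 2),
      omegaKL κ lam (sin φ) * sin φ ^ μ * cos φ ^ (m + 2) := by
    refine intervalIntegral.integral_nonneg hpi.le fun φ h => ?_
    have h1 : 0 ≤ sin φ := sin_nonneg_of_nonneg_of_le_pi h.1 (by linarith [h.2])
    have h2 : 0 ≤ cos φ := cos_nonneg_of_mem_Icc ⟨by linarith [h.1], h.2⟩
    have h3 := omegaKL_nonneg (lam := lam) hκ (sin φ)
    positivity
  -- The derivative formula needs `sin φ ≠ 0`, hence the version of the fundamental theorem that asks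
  -- for differentiability on the open interval only.
  have hFTC := intervalIntegral.integral_eq_sub_of_hasDerivAt_of_le hpi.le
    (f := fun φ => omegaKL κ lam (sin φ) * (sin φ ^ (μ + 1) * cos φ ^ (m + 1)))
    (f' := fun φ => W' φ * (sin φ ^ (μ + 1) * cos φ ^ (m + 1)) +
      (μ + 1) * (omegaKL κ lam (sin φ) * sin φ ^ μ * cos φ ^ (m + 2)) -
      (m + 1) * (omegaKL κ lam (sin φ) * sin φ ^ (μ + 2) * cos φ ^ m))
    (hW.mul ((hpow _ (by linarith)).mul (continuous_cos.pow _))).continuousOn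
    (fun φ h => by
      have hsp := hs φ h
      have h1 := (hasDerivAt_sin φ).rpow_const (p := μ + 1) (Or.inl hsp.ne')
      have h2 := (hasDerivAt_cos φ).pow (m + 1)
      refine ((hWd φ h).mul (h1.mul h2)).congr_deriv ?_
      have e1 : sin φ ^ (μ + 1) = sin φ ^ μ * sin φ := Real.rpow_add_one hsp.ne' μ
      have e2 : sin φ ^ (μ + 2) = sin φ ^ μ * sin φ ^ 2 := by
        rw [Real.rpow_add hsp, Real.rpow_two]
      simp only [e1, e2, add_sub_cancel_right, Nat.add_sub_cancel, Pi.pow_apply, Pi.mul_apply]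
      push_cast
      ring)
    ((hA.add (hB.const_mul _)).sub (hC.const_mul _))
  rw [intervalIntegral.integral_sub (hA.add (hB.const_mul _)) (hC.const_mul _),
    intervalIntegral.integral_add hA (hB.const_mul _), intervalIntegral.integral_const_mul,
    intervalIntegral.integral_const_mul] at hFTC
  have hp1 : μ + 1 ≠ 0 := by linarith
  simp only [cos_pi_div_two, sin_zero, Real.zero_rpow hp1, zero_pow (Nat.succ_ne_zero m),
    zero_mul, mul_zero, sub_self] at hFTC
  have hmp : (0 : ℝ) < m + 1 := by positivity
  rw [one_div, inv_mul_lt_iff₀ hmp]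
  nlinarith [mul_nonneg hμ hBnn]
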